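/- arXiv:1403.2954 — 2 statements merged into one kernel-verified Lean document; each statement's English description precedes it below -/
import Mathlib

section
/- For every β ∈ (0, 1/2) there exist constants C' > 0 and t₀ ∈ (0, 1] such that for all t ∈ (0, t₀], ∫_ℝ f^{t^β}(x) dν_t(x) ≤ C' · t^{1 + β(2 − α)}. (Small-time bound for the thresholded moments of a pure-jump Lévy distribution; this is Proposition 4.1 of the paper.) -/
open MeasureTheory

/-!
Put `v = t ^ β` and `u = 1 / v`. Since `f` is supported in `[-2, 2] ⊆ [-π, π]` and is at most
quadratic, it is dominated by a multiple of `1 - cos`, so it suffices to bound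
`∫ (1 - cos (u x)) dν_t = 1 - Re exp (t ψ(u))`, with `ψ` the Lévy–Khintchine exponent; this is at
most `-t Re ψ(u) + (t Im ψ(u))² / 2`. Let `Φ(u) = ∫ min 1 ((u x)²) dμ`. Then `-Re ψ(u) ≤ 2 Φ(u)`,
and the Cauchy–Schwarz inequality applied to the right-hand side of
`|e^{iy} - 1 - iy| ≤ 3 |y| min 1 |y|` gives `|ψ(u)|² ≤ 9 u² (∫ x² dμ) Φ(u)`. The condition
`β < 1 / 2` enters as `t u² ≤ 1`, which turns both contributions into multiples of `t Φ(u)`.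
Finally `Φ(u) = ∫ max(v, |x|)⁻² x² dμ` is a negative moment of the finite measure `x² dμ`, whose
mass on `[-w, w]` is `O(w ^ (2 - α))`, so the layer-cake formula yields `Φ(u) = O(v ^ (-α))`.
-/

theorem setIntegral_Ioc_zero_rpow_neg {r T : ℝ} (hr : r < 1) (hT : 0 ≤ T) :
    ∫ s in Set.Ioc 0 T, s ^ (-r) = T ^ (1 - r) / (1 - r) := by
  rw [← intervalIntegral.integral_of_le hT, integral_rpow (.inl (neg_lt_neg hr)),
    Real.zero_rpow (by linarith), sub_zero, neg_add_eq_sub]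

section GeneralMeasure

variable {Ω : Type*} {mΩ : MeasurableSpace Ω} {ρ : Measure Ω}

theorem sq_integral_mul_le_integral_sq_mul_integral_sq {f g : Ω → ℝ}
    (hf : MemLp f 2 ρ) (hg : MemLp g 2 ρ) :
    (∫ x, f x * g x ∂ρ) ^ 2 ≤ (∫ x, f x ^ 2 ∂ρ) * ∫ x, g x ^ 2 ∂ρ := by
  have inner_toLp {h k : Ω → ℝ} (hh : MemLp h 2 ρ) (hk : MemLp k 2 ρ) :
      inner ℝ (hh.toLp h) (hk.toLp k) = ∫ x, h x * k x ∂ρ := by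
    rw [L2.inner_def]
    refine integral_congr_ae ?_
    filter_upwards [hh.coeFn_toLp, hk.coeFn_toLp] with x hhx hkx
    simp only [hhx, hkx, RCLike.inner_apply, conj_trivial, mul_comm]
  simpa only [inner_toLp, ← sq] using real_inner_mul_inner_self_le (hf.toLp f) (hg.toLp g)

theorem integral_rpow_neg_le_of_measureReal_le [IsFiniteMeasure ρ] {g : Ω → ℝ}
    (hg : Measurable g) {v C p q : ℝ} (hv : 0 < v) (hvg : ∀ x, v ≤ g x) (hq : 0 < q) (hpq : p < q)
    (hC : ∀ w, v ≤ w → ρ.real {x | g x ≤ w} ≤ C * w ^ p) :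
    ∫ x, g x ^ (-q) ∂ρ ≤ C * (q / (q - p)) * v ^ (p - q) := by
  have le_cutoff (x : Ω) : g x ^ (-q) ≤ v ^ (-q) :=
    Real.rpow_le_rpow_of_nonpos hv (hvg x) (neg_nonpos.2 hq.le)
  have nonneg (x : Ω) : 0 ≤ g x ^ (-q) := Real.rpow_nonneg (hv.le.trans (hvg x)) _
  have integrable : Integrable (fun x ↦ g x ^ (-q)) ρ :=
    .of_bound (hg.pow_const _).aestronglyMeasurable (v ^ (-q)) <| .of_forall fun x ↦ by
      rw [Real.norm_of_nonneg (nonneg x)]; exact le_cutoff x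
  have exponent_lt : p / q < 1 := (div_lt_one hq).2 hpq
  have level_bound {s : ℝ} (hs : s ∈ Set.Ioc 0 (v ^ (-q))) :
      ρ.real {x | s ≤ g x ^ (-q)} ≤ C * s ^ (-(p / q)) := by
    have level_eq : {x | s ≤ g x ^ (-q)} = {x | g x ≤ s ^ (-q)⁻¹} := by
      ext x
      exact (Real.le_rpow_inv_iff_of_neg (hv.trans_le (hvg x)) hs.1 (neg_lt_zero.2 hq)).symm
    have hvs : v ≤ s ^ (-q)⁻¹ := (Real.le_rpow_inv_iff_of_neg hv hs.1 (neg_lt_zero.2 hq)).2 hs.2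
    rw [level_eq]
    refine (hC _ hvs).trans_eq ?_
    rw [← Real.rpow_mul hs.1.le]
    congr 2
    field_simp
  calc ∫ x, g x ^ (-q) ∂ρ
      = ∫ s in Set.Ioc 0 (v ^ (-q)), ρ.real {x | s ≤ g x ^ (-q)} :=
        integrable.integral_eq_integral_Ioc_meas_le (.of_forall nonneg) (.of_forall le_cutoff)
    _ ≤ ∫ s in Set.Ioc 0 (v ^ (-q)), C * s ^ (-(p / q)) := by
        refine integral_mono_of_nonneg (.of_forall fun _ ↦ measureReal_nonneg) ?_ ?_
        · exact (intervalIntegral.intervalIntegrable_rpow' (neg_lt_neg exponent_lt)).1.const_mul C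
        · exact ae_restrict_of_forall_mem measurableSet_Ioc fun s hs ↦ level_bound hs
    _ = C * (q / (q - p)) * v ^ (p - q) := by
        have exponent_eq : -q * (1 - p / q) = p - q := by field_simp; ring
        have quotient_eq : (1 - p / q)⁻¹ = q / (q - p) := by rw [one_sub_div hq.ne', inv_div]
        rw [integral_const_mul, setIntegral_Ioc_zero_rpow_neg exponent_lt (by positivity),
          ← Real.rpow_mul hv.le, exponent_eq, div_eq_mul_inv, quotient_eq]
        ring

end GeneralMeasure

theorem norm_exp_I_mul_sub_one_sub_le (y : ℝ) :
    ‖Complex.exp (Complex.I * y) - 1 - Complex.I * y‖ ≤ 3 * (|y| * min 1 |y|) := by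
  have norm_I_mul : ‖Complex.I * y‖ = |y| := by simp
  rcases le_total |y| 1 with hy | hy
  · rw [min_eq_right hy]
    calc ‖Complex.exp (Complex.I * y) - 1 - Complex.I * y‖
        ≤ |y| ^ 2 := by
          simpa only [norm_I_mul] using
            Complex.norm_exp_sub_one_sub_id_le (norm_I_mul.trans_le hy)
      _ ≤ 3 * (|y| * |y|) := by linarith [mul_self_nonneg |y|]
  · rw [min_eq_left hy]
    calc ‖Complex.exp (Complex.I * y) - 1 - Complex.I * y‖
        ≤ ‖Complex.exp (Complex.I * y) - 1‖ + ‖Complex.I * y‖ := norm_sub_le _ _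
      _ ≤ |y| + |y| := add_le_add Real.norm_exp_I_mul_ofReal_sub_one_le norm_I_mul.le
      _ ≤ 3 * (|y| * 1) := by linarith [abs_nonneg y]

theorem one_sub_cos_le_two_mul_min (y : ℝ) : 1 - Real.cos y ≤ 2 * min 1 (y ^ 2) := by
  rw [mul_min_of_nonneg _ _ zero_le_two]
  refine le_min ?_ ?_
  · linarith [Real.neg_one_le_cos y]
  · linarith [Real.one_sub_sq_div_two_le_cos (x := y), sq_nonneg y]

theorem one_sub_re_exp_le {z : ℂ} (hz : z.re ≤ 0) :
    1 - (Complex.exp z).re ≤ -z.re + z.im ^ 2 / 2 := by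
  have exp_le_one : Real.exp z.re ≤ 1 := Real.exp_le_one_iff.2 hz
  calc 1 - (Complex.exp z).re
      = (1 - Real.exp z.re) + Real.exp z.re * (1 - Real.cos z.im) := by rw [Complex.exp_re]; ring
    _ ≤ -z.re + 1 * (z.im ^ 2 / 2) := by
        gcongr
        · linarith [Real.add_one_le_exp z.re]
        · linarith [Real.cos_le_one z.im]
        · linarith [Real.one_sub_sq_div_two_le_cos (x := z.im)]
    _ = -z.re + z.im ^ 2 / 2 := by rw [one_mul]

/-- The Lévy–Khintchine exponent `ψ(u) = ∫ (e^{iux} - 1 - iux) dμ(x)` of the fully compensated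
pure-jump Lévy process with Lévy measure `μ`. -/
noncomputable def compensatedLevyExponent (μ : Measure ℝ) (u : ℝ) : ℂ :=
  ∫ x : ℝ, (Complex.exp (Complex.I * (u * x : ℝ)) - 1 - Complex.I * (u * x : ℝ)) ∂μ

/-- The integral of `min 1 ((u x)²)` against `μ`, which measures the jumps of a Lévy measure `μ`
on the spatial scale `1 / u`. -/
noncomputable def truncatedSecondMoment (μ : Measure ℝ) (u : ℝ) : ℝ :=
  ∫ x : ℝ, min 1 ((u * x) ^ 2) ∂μ

section SecondMoment

variable {μ : Measure ℝ} (hμ : Integrable (fun x : ℝ ↦ x ^ 2) μ)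
include hμ

theorem memLp_two_abs_const_mul (u : ℝ) : MemLp (fun x : ℝ ↦ |u * x|) 2 μ :=
  (((memLp_two_iff_integrable_sq aestronglyMeasurable_id).2 hμ).const_mul u).abs

theorem memLp_two_min_one_abs (u : ℝ) : MemLp (fun x : ℝ ↦ min 1 |u * x|) 2 μ := by
  refine (memLp_two_abs_const_mul hμ u).mono (by fun_prop) (.of_forall fun x ↦ ?_)
  rw [Real.norm_of_nonneg (by positivity), Real.norm_of_nonneg (by positivity)]
  exact min_le_right _ _

theorem integrable_min_one_sq (u : ℝ) : Integrable (fun x : ℝ ↦ min 1 ((u * x) ^ 2)) μ := by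
  refine (hμ.const_mul (u ^ 2)).mono' (by fun_prop) (.of_forall fun x ↦ ?_)
  rw [Real.norm_of_nonneg (by positivity), ← mul_pow]
  exact min_le_right _ _

theorem integrable_exp_I_mul_sub_one_sub (u : ℝ) :
    Integrable (fun x : ℝ ↦
      Complex.exp (Complex.I * (u * x : ℝ)) - 1 - Complex.I * (u * x : ℝ)) μ :=
  (((memLp_two_abs_const_mul hμ u).integrable_mul (memLp_two_min_one_abs hμ u)).const_mul 3).mono'
    (by fun_prop) (.of_forall fun _ ↦ norm_exp_I_mul_sub_one_sub_le _)

theorem neg_re_compensatedLevyExponent (u : ℝ) :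
    -(compensatedLevyExponent μ u).re = ∫ x, (1 - Real.cos (u * x)) ∂μ := by
  have re_integrand (x : ℝ) :
      (Complex.exp (Complex.I * (u * x : ℝ)) - 1 - Complex.I * (u * x : ℝ)).re
        = -(1 - Real.cos (u * x)) := by
    rw [mul_comm Complex.I]
    simp only [Complex.sub_re, Complex.exp_ofReal_mul_I_re, Complex.one_re, Complex.re_ofReal_mul,
      Complex.I_re]
    ring
  have := integral_re (integrable_exp_I_mul_sub_one_sub hμ u)
  simp only [RCLike.re_eq_complex_re, re_integrand, integral_neg] at this
  rw [compensatedLevyExponent, ← this, neg_neg]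

theorem re_compensatedLevyExponent_nonpos (u : ℝ) : (compensatedLevyExponent μ u).re ≤ 0 := by
  rw [← neg_nonneg, neg_re_compensatedLevyExponent hμ]
  exact integral_nonneg fun x ↦ sub_nonneg.2 (Real.cos_le_one _)

theorem neg_re_compensatedLevyExponent_le (u : ℝ) :
    -(compensatedLevyExponent μ u).re ≤ 2 * truncatedSecondMoment μ u := by
  rw [neg_re_compensatedLevyExponent hμ, truncatedSecondMoment, ← integral_const_mul]
  exact integral_mono_of_nonneg (.of_forall fun x ↦ sub_nonneg.2 (Real.cos_le_one _))
    ((integrable_min_one_sq hμ u).const_mul 2) (.of_forall fun x ↦ one_sub_cos_le_two_mul_min _)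

theorem sq_norm_compensatedLevyExponent_le (u : ℝ) :
    ‖compensatedLevyExponent μ u‖ ^ 2 ≤
      9 * (u ^ 2 * ∫ x, x ^ 2 ∂μ) * truncatedSecondMoment μ u := by
  have hL := memLp_two_abs_const_mul hμ u
  have hmin := memLp_two_min_one_abs hμ u
  have norm_le : ‖compensatedLevyExponent μ u‖ ≤ 3 * ∫ x, |u * x| * min 1 |u * x| ∂μ := by
    rw [← integral_const_mul]
    exact norm_integral_le_of_norm_le ((hL.integrable_mul hmin).const_mul 3)
      (.of_forall fun x ↦ norm_exp_I_mul_sub_one_sub_le _)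
  have sq_min (x : ℝ) : min 1 |u * x| ^ 2 = min 1 ((u * x) ^ 2) := by
    rw [pow_left_monotoneOn.map_min (Set.mem_Ici.2 zero_le_one) (Set.mem_Ici.2 (abs_nonneg _)),
      one_pow, sq_abs]
  calc ‖compensatedLevyExponent μ u‖ ^ 2
      ≤ (3 * ∫ x, |u * x| * min 1 |u * x| ∂μ) ^ 2 := by gcongr
    _ = 9 * (∫ x, |u * x| * min 1 |u * x| ∂μ) ^ 2 := by ring
    _ ≤ 9 * ((∫ x, |u * x| ^ 2 ∂μ) * ∫ x, min 1 |u * x| ^ 2 ∂μ) := by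
        gcongr
        exact sq_integral_mul_le_integral_sq_mul_integral_sq hL hmin
    _ = 9 * (u ^ 2 * ∫ x, x ^ 2 ∂μ) * truncatedSecondMoment μ u := by
        simp only [sq_abs, mul_pow, integral_const_mul, sq_min, truncatedSecondMoment, mul_assoc]

theorem truncatedSecondMoment_le_rpow {u α C : ℝ} (hu : 0 < u) (hα : 0 < α)
    (hC : ∀ w, u⁻¹ ≤ w → ∫ x in Set.Icc (-w) w, x ^ 2 ∂μ ≤ C * w ^ (2 - α)) :
    truncatedSecondMoment μ u ≤ C * (2 / α) * u ^ α := by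
  let ρ := μ.withDensity fun x ↦ ENNReal.ofReal (x ^ 2)
  have : IsFiniteMeasure ρ := isFiniteMeasure_withDensity_ofReal hμ.2
  have ρ_ball (w : ℝ) (hw : u⁻¹ ≤ w) : ρ.real {x | max u⁻¹ |x| ≤ w} ≤ C * w ^ (2 - α) := by
    have ball_eq : {x : ℝ | max u⁻¹ |x| ≤ w} = Set.Icc (-w) w := by
      ext x
      simp only [Set.mem_ofPred_eq, max_le_iff, hw, true_and, abs_le, Set.mem_Icc]
    rw [ball_eq, measureReal_def, withDensity_apply _ measurableSet_Icc,
      ← integral_eq_lintegral_of_nonneg_ae (.of_forall fun x ↦ sq_nonneg x) (by fun_prop)]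
    exact hC w hw
  have min_eq (x : ℝ) : min 1 ((u * x) ^ 2) = x ^ 2 * max u⁻¹ |x| ^ (-2 : ℝ) := by
    rw [Real.rpow_neg (by positivity), Real.rpow_two]
    rcases le_total |x| u⁻¹ with hx | hx
    · have : |u * x| ≤ 1 := by
        rwa [abs_mul, abs_of_pos hu, ← le_inv_mul_iff₀ hu, mul_one]
      rw [max_eq_left hx, min_eq_right ((sq_le_one_iff_abs_le_one _).2 this)]
      field_simp
    · have hx0 : x ≠ 0 := abs_pos.1 ((inv_pos.2 hu).trans_le hx)
      have : 1 ≤ |u * x| := by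
        rwa [abs_mul, abs_of_pos hu, ← inv_mul_le_iff₀ hu, mul_one]
      rw [max_eq_right hx, min_eq_left ((one_le_sq_iff_one_le_abs _).2 this), sq_abs]
      field_simp
  calc truncatedSecondMoment μ u
      = ∫ x, max u⁻¹ |x| ^ (-2 : ℝ) ∂ρ := by
        rw [integral_withDensity_eq_integral_toReal_smul (by fun_prop)
          (.of_forall fun _ ↦ ENNReal.ofReal_lt_top)]
        simp only [truncatedSecondMoment, min_eq, ENNReal.toReal_ofReal (sq_nonneg _), smul_eq_mul]
    _ ≤ C * (2 / (2 - (2 - α))) * u⁻¹ ^ ((2 - α) - 2) :=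
        integral_rpow_neg_le_of_measureReal_le (by fun_prop) (inv_pos.2 hu)
          (fun x ↦ le_max_left _ _) two_pos (by linarith) ρ_ball
    _ = C * (2 / α) * u ^ α := by
        rw [sub_sub_cancel, sub_sub_cancel_left, Real.inv_rpow hu.le, Real.rpow_neg hu.le, inv_inv]

theorem setIntegral_sq_le_max_mul_rpow {α C : ℝ} (hα : α ≤ 2)
    (hC : ∀ v ∈ Set.Ioc (0 : ℝ) 1, ∫ x in Set.Icc (-v) v, x ^ 2 ∂μ ≤ C * v ^ (2 - α))
    {w : ℝ} (hw : 0 < w) :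
    ∫ x in Set.Icc (-w) w, x ^ 2 ∂μ ≤ max C (∫ x, x ^ 2 ∂μ) * w ^ (2 - α) := by
  rcases le_total w 1 with hw1 | hw1
  · refine (hC w ⟨hw, hw1⟩).trans ?_
    gcongr
    exact le_max_left _ _
  · calc ∫ x in Set.Icc (-w) w, x ^ 2 ∂μ
        ≤ ∫ x, x ^ 2 ∂μ := setIntegral_le_integral hμ (.of_forall fun x ↦ sq_nonneg x)
      _ ≤ max C (∫ x, x ^ 2 ∂μ) := le_max_right _ _
      _ ≤ max C (∫ x, x ^ 2 ∂μ) * w ^ (2 - α) :=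
        le_mul_of_one_le_right (le_max_of_le_right (integral_nonneg fun x ↦ sq_nonneg x))
          (Real.one_le_rpow hw1 (sub_nonneg.2 hα))

end SecondMoment

theorem integral_one_sub_cos_eq_one_sub_re_charFun (ν : Measure ℝ) [IsProbabilityMeasure ν]
    (u : ℝ) :
    ∫ x, (1 - Real.cos (u * x)) ∂ν = 1 - (charFun ν u).re := by
  have exp_integrable : Integrable (fun x : ℝ ↦ Complex.exp (u * x * Complex.I)) ν := by
    refine .of_bound (by fun_prop) 1 (.of_forall fun x ↦ ?_)
    rw [← Complex.ofReal_mul, Complex.norm_exp_ofReal_mul_I]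
  have exp_re (x : ℝ) : (Complex.exp (u * x * Complex.I)).re = Real.cos (u * x) := by
    rw [← Complex.ofReal_mul, Complex.exp_ofReal_mul_I_re]
  have cos_integral := integral_re exp_integrable
  have cos_integrable := exp_integrable.re
  simp only [RCLike.re_eq_complex_re, exp_re] at cos_integral cos_integrable
  rw [integral_sub (integrable_const _) cos_integrable, cos_integral, charFun_apply_real]
  simp only [integral_const, probReal_univ, one_smul]

theorem integral_one_sub_cos_le {μ ν : Measure ℝ} [IsProbabilityMeasure ν]
    (hμ : Integrable (fun x : ℝ ↦ x ^ 2) μ) {t u : ℝ} (ht : 0 ≤ t) (htu : t * u ^ 2 ≤ 1)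
    (hν : charFun ν u = Complex.exp (t * compensatedLevyExponent μ u)) :
    ∫ x, (1 - Real.cos (u * x)) ∂ν ≤
      (2 + 9 / 2 * ∫ x, x ^ 2 ∂μ) * (t * truncatedSecondMoment μ u) := by
  set ψ := compensatedLevyExponent μ u
  set Φ := truncatedSecondMoment μ u
  set M := ∫ x, x ^ 2 ∂μ
  have re_nonpos : (t * ψ).re ≤ 0 := by
    rw [Complex.re_ofReal_mul]
    exact mul_nonpos_of_nonneg_of_nonpos ht (re_compensatedLevyExponent_nonpos hμ u)
  have neg_re_le : -(t * ψ).re ≤ t * (2 * Φ) := by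
    rw [Complex.re_ofReal_mul, ← mul_neg]
    exact mul_le_mul_of_nonneg_left (neg_re_compensatedLevyExponent_le hμ u) ht
  have sq_im_le : (t * ψ).im ^ 2 ≤ 9 * M * (t * Φ) := by
    have : 0 ≤ M := integral_nonneg fun x ↦ sq_nonneg x
    have Φ_nonneg : 0 ≤ Φ := integral_nonneg fun x ↦ by positivity
    calc (t * ψ).im ^ 2 = t ^ 2 * |ψ.im| ^ 2 := by rw [Complex.im_ofReal_mul, mul_pow, sq_abs]
      _ ≤ t ^ 2 * ‖ψ‖ ^ 2 := by gcongr; exact Complex.abs_im_le_norm ψ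
      _ ≤ t ^ 2 * (9 * (u ^ 2 * M) * Φ) := by
        gcongr; exact sq_norm_compensatedLevyExponent_le hμ u
      _ = t * u ^ 2 * (9 * M * (t * Φ)) := by ring
      _ ≤ 9 * M * (t * Φ) := mul_le_of_le_one_left (by positivity) htu
  calc ∫ x, (1 - Real.cos (u * x)) ∂ν
      = 1 - (Complex.exp (t * ψ)).re := by rw [integral_one_sub_cos_eq_one_sub_re_charFun, hν]
    _ ≤ -(t * ψ).re + (t * ψ).im ^ 2 / 2 := one_sub_re_exp_le re_nonpos
    _ ≤ t * (2 * Φ) + 9 * M * (t * Φ) / 2 := by gcongr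
    _ = (2 + 9 / 2 * M) * (t * Φ) := by ring

theorem integral_one_sub_cos_le_rpow {μ ν : Measure ℝ} [IsProbabilityMeasure ν]
    (hμ : Integrable (fun x : ℝ ↦ x ^ 2) μ) {α C : ℝ} (hα_pos : 0 < α) (hα_le : α ≤ 2)
    (hC : ∀ v ∈ Set.Ioc (0 : ℝ) 1, ∫ x in Set.Icc (-v) v, x ^ 2 ∂μ ≤ C * v ^ (2 - α))
    {t u : ℝ} (ht : 0 ≤ t) (hu : 0 < u) (htu : t * u ^ 2 ≤ 1)
    (hν : charFun ν u = Complex.exp (t * compensatedLevyExponent μ u)) :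
    ∫ x, (1 - Real.cos (u * x)) ∂ν ≤
      (2 + 9 / 2 * ∫ x, x ^ 2 ∂μ) * (max C (∫ x, x ^ 2 ∂μ) * (2 / α)) * (t * u ^ α) := by
  set M := ∫ x, x ^ 2 ∂μ
  have : 0 ≤ M := integral_nonneg fun x ↦ sq_nonneg x
  have moment_le : truncatedSecondMoment μ u ≤ max C M * (2 / α) * u ^ α :=
    truncatedSecondMoment_le_rpow hμ hu hα_pos fun w hw ↦
      setIntegral_sq_le_max_mul_rpow hμ hα_le hC ((inv_pos.2 hu).trans_le hw)
  calc ∫ x, (1 - Real.cos (u * x)) ∂ν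
      ≤ (2 + 9 / 2 * M) * (t * truncatedSecondMoment μ u) := integral_one_sub_cos_le hμ ht htu hν
    _ ≤ (2 + 9 / 2 * M) * (t * (max C M * (2 / α) * u ^ α)) := by gcongr
    _ = (2 + 9 / 2 * M) * (max C M * (2 / α)) * (t * u ^ α) := by ring

theorem le_mul_one_sub_cos_of_le_mul_sq {f : ℝ → ℝ} {A : ℝ} (hA : 0 ≤ A)
    (hf_supp : Function.support f ⊆ Set.Icc (-Real.pi) Real.pi) (hf_le : ∀ x, f x ≤ A * x ^ 2)
    (x : ℝ) : f x ≤ A * (Real.pi ^ 2 / 2) * (1 - Real.cos x) := by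
  by_cases hx : f x = 0
  · rw [hx]
    have := sub_nonneg.2 (Real.cos_le_one x)
    positivity
  · have cos_le := Real.cos_le_one_sub_mul_cos_sq (abs_le.2 (hf_supp hx))
    calc f x ≤ A * x ^ 2 := hf_le x
      _ = A * (Real.pi ^ 2 / 2) * (2 / Real.pi ^ 2 * x ^ 2) := by field_simp
      _ ≤ A * (Real.pi ^ 2 / 2) * (1 - Real.cos x) := by gcongr; linarith

theorem integral_comp_mul_le_mul_integral_one_sub_cos {f : ℝ → ℝ} {K : ℝ}
    (hf_nonneg : ∀ x, 0 ≤ f x) (hf_le : ∀ x, f x ≤ K * (1 - Real.cos x))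
    (ν : Measure ℝ) [IsFiniteMeasure ν] (u : ℝ) :
    ∫ x, f (u * x) ∂ν ≤ K * ∫ x, (1 - Real.cos (u * x)) ∂ν := by
  have cos_integrable : Integrable (fun x ↦ Real.cos (u * x)) ν :=
    .of_bound (by fun_prop) 1 (.of_forall fun x ↦ Real.abs_cos_le_one _)
  rw [← integral_const_mul]
  exact integral_mono_of_nonneg (.of_forall fun x ↦ hf_nonneg _)
    (((integrable_const 1).sub cos_integrable).const_mul K) (.of_forall fun x ↦ hf_le _)

theorem small_time_thresholded_moment_bound_general {f : ℝ → ℝ} {A : ℝ}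
    (hf_nonneg : ∀ x, 0 ≤ f x) (hf_supp : Function.support f ⊆ Set.Icc (-Real.pi) Real.pi)
    (hf_le : ∀ x, f x ≤ A * x ^ 2) {μ : Measure ℝ}
    (hμ_mom : Integrable (fun x : ℝ ↦ x ^ 2) μ) {α C : ℝ} (hα_pos : 0 < α) (hα_le : α ≤ 2)
    (hμ_small : ∀ v ∈ Set.Ioc (0 : ℝ) 1, ∫ x in Set.Icc (-v) v, x ^ 2 ∂μ ≤ C * v ^ (2 - α))
    {ν : ℝ → Measure ℝ} (hν_prob : ∀ t, 0 < t → IsProbabilityMeasure (ν t))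
    (hν_char : ∀ t : ℝ, 0 < t → ∀ u,
      charFun (ν t) u = Complex.exp (t * compensatedLevyExponent μ u))
    {β : ℝ} (hβ : β ≤ 1 / 2) :
    ∃ C' > (0 : ℝ), ∀ t ∈ Set.Ioc (0 : ℝ) 1,
      ∫ x, (t ^ β) ^ 2 * f (x / t ^ β) ∂(ν t) ≤ C' * t ^ (1 + β * (2 - α)) := by
  have hA : 0 ≤ A := by simpa using (hf_nonneg 1).trans (hf_le 1)
  let B := A * (Real.pi ^ 2 / 2)
  let K := (2 + 9 / 2 * ∫ x, x ^ 2 ∂μ) * (max C (∫ x, x ^ 2 ∂μ) * (2 / α))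
  refine ⟨max 1 (B * K), by positivity, fun t ⟨ht, ht1⟩ ↦ ?_⟩
  have := hν_prob t ht
  set v := t ^ β with hv
  have v_pos : 0 < v := Real.rpow_pos_of_pos ht β
  have t_le_sq : t ≤ v ^ 2 := by
    rw [hv, ← Real.rpow_mul_natCast ht.le]
    exact Real.self_le_rpow_of_le_one ht.le ht1 (by push_cast; linarith)
  have t_mul_sq_le : t * v⁻¹ ^ 2 ≤ 1 := by
    rwa [inv_pow, mul_inv_le_iff₀ (by positivity), one_mul]
  have rpow_eq : t ^ (1 + β * (2 - α)) = v ^ 2 * (t * v⁻¹ ^ α) := by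
    rw [Real.rpow_add ht, Real.rpow_one, Real.rpow_mul ht.le, ← hv, Real.rpow_sub v_pos,
      Real.rpow_two, Real.inv_rpow v_pos.le]
    ring
  calc ∫ x, v ^ 2 * f (x / v) ∂(ν t)
      = v ^ 2 * ∫ x, f (v⁻¹ * x) ∂(ν t) := by simp only [integral_const_mul, div_eq_inv_mul]
    _ ≤ v ^ 2 * (B * ∫ x, (1 - Real.cos (v⁻¹ * x)) ∂(ν t)) := by
        gcongr
        exact integral_comp_mul_le_mul_integral_one_sub_cos hf_nonneg
          (le_mul_one_sub_cos_of_le_mul_sq hA hf_supp hf_le) _ _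
    _ ≤ v ^ 2 * (B * (K * (t * v⁻¹ ^ α))) := by
        gcongr
        exact integral_one_sub_cos_le_rpow hμ_mom hα_pos hα_le hμ_small ht.le (inv_pos.2 v_pos)
          t_mul_sq_le (hν_char t ht v⁻¹)
    _ = B * K * t ^ (1 + β * (2 - α)) := by rw [rpow_eq]; ring
    _ ≤ max 1 (B * K) * t ^ (1 + β * (2 - α)) := by
        gcongr
        exact le_max_right _ _

theorem le_two_mul_sq_of_eq_sq {f : ℝ → ℝ} (hf_sq : ∀ x, |x| ≤ 1 → f x = x ^ 2)
    (hf_le : ∀ x, f x ≤ 2) (x : ℝ) : f x ≤ 2 * x ^ 2 := by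
  rcases le_total |x| 1 with hx | hx
  · rw [hf_sq x hx]
    linarith [sq_nonneg x]
  · linarith [hf_le x, (one_le_sq_iff_one_le_abs x).2 hx]

/-- Small-time bound for the thresholded moments of a pure-jump Lévy distribution
(Proposition 4.1): for every `β ∈ (0, 1/2)` there are `C' > 0` and `t₀ ∈ (0,1]` such
that `∫ f^{t^β} dν_t ≤ C' · t^{1 + β(2-α)}` for all `t ∈ (0, t₀]`. -/
theorem small_time_thresholded_moment_bound
    (f : ℝ → ℝ) (hf_smooth : ContDiff ℝ (⊤ : ℕ∞) f)
    (hf_supp : Function.support f ⊆ Set.Icc (-2 : ℝ) 2)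
    (hf_sq : ∀ x : ℝ, |x| ≤ 1 → f x = x ^ 2)
    (hf_bdd : ∀ x : ℝ, 0 ≤ f x ∧ f x ≤ 2)
    (μ : Measure ℝ)
    (hμ_supp : μ (Set.Icc (-1 : ℝ) 1)ᶜ = 0)
    (hμ_mom : Integrable (fun x : ℝ => x ^ 2) μ)
    (α C : ℝ) (hα : α ∈ Set.Ioo (0 : ℝ) 2) (hC : 0 < C)
    (hμ_small : ∀ v ∈ Set.Ioc (0 : ℝ) 1,
      ∫ x in Set.Icc (-v) v, x ^ 2 ∂μ ≤ C * v ^ (2 - α))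
    (ν : ℝ → Measure ℝ)
    (hν_prob : ∀ t : ℝ, 0 < t → IsProbabilityMeasure (ν t))
    (hν_char : ∀ t : ℝ, 0 < t → ∀ u : ℝ,
      ∫ x : ℝ, Complex.exp (Complex.I * (u : ℂ) * (x : ℂ)) ∂(ν t) =
        Complex.exp ((t : ℂ) *
          ∫ x : ℝ, (Complex.exp (Complex.I * (u : ℂ) * (x : ℂ)) - 1
            - Complex.I * (u : ℂ) * (x : ℂ)) ∂μ))
    (β : ℝ) (hβ : β ∈ Set.Ioo (0 : ℝ) (1 / 2)) :
    ∃ C' > (0 : ℝ), ∃ t₀ ∈ Set.Ioc (0 : ℝ) 1, ∀ t ∈ Set.Ioc (0 : ℝ) t₀,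
      ∫ x : ℝ, (t ^ β) ^ 2 * f (x / t ^ β) ∂(ν t) ≤ C' * t ^ (1 + β * (2 - α)) := by
  have hf_supp_pi : Function.support f ⊆ Set.Icc (-Real.pi) Real.pi :=
    hf_supp.trans (Set.Icc_subset_Icc (neg_le_neg Real.two_le_pi) Real.two_le_pi)
  have hν_charFun (t : ℝ) (ht : 0 < t) (u : ℝ) :
      charFun (ν t) u = Complex.exp (t * compensatedLevyExponent μ u) := by
    simpa only [charFun_apply_real, compensatedLevyExponent, Complex.ofReal_mul, mul_assoc,
      mul_comm Complex.I] using hν_char t ht u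
  obtain ⟨C', hC', bound⟩ := small_time_thresholded_moment_bound_general (fun x ↦ (hf_bdd x).1)
    hf_supp_pi (le_two_mul_sq_of_eq_sq hf_sq fun x ↦ (hf_bdd x).2) hμ_mom hα.1 hα.2.le hμ_small
    hν_prob hν_charFun hβ.2.le
  exact ⟨C', hC', 1, ⟨one_pos, le_rfl⟩, bound⟩
end

section
/- Let μ be a Borel measure on ℝ with μ(ℝ ∖ [−1,1]) = 0 and ∫_ℝ x² dμ(x) < ∞, and let f : ℝ → ℂ be a C^∞ function with compact support such that f(0) = 0 and f′(0) = 0. Then f is μ-integrable, for every u ∈ ℝ the integral ψ̄(u) := ∫_ℝ (e^{−iux} − 1 + iux) dμ(x) converges absolutely, the function u ↦ (𝓕f)(u) · ψ̄(u) is integrable on ℝ, and (2π)^{−1} ∫_ℝ (𝓕f)(u) · ψ̄(u) du = ∫_ℝ f dμ. (This is the computation of the leading term in the proof of Proposition 4.1.) -/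
open MeasureTheory

/-!
Pairing the compensated exponential `e^{-iux} - 1 + iux` with `𝓕f` integrates, by Fourier inversion,
to `2π (f(x) - f(0) - x f'(0))`: each of its three terms is an inversion integral, the last one
differentiated at the origin. Integrating against `μ` gives the identity once the order of
integration is exchanged, which the bound `|e^{-iux} - 1 + iux| ≤ 2 u² x²` permits. The measure `μ`
may have infinite mass at `0`, but it is `σ`-finite on the set where `x²` does not vanish, and the
compensated exponential vanishes elsewhere.
-/

open scoped FourierTransform Real SchwartzMap

section Fubini

variable {α β 𝕜 E : Type*} [MeasurableSpace α] [MeasurableSpace β] [RCLike 𝕜]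
  [NormedAddCommGroup E] [NormedSpace 𝕜 E]
  {κ : Measure α} {μ : Measure β}
  {K : α → β → 𝕜} {φ : α → E} {a : α → ℝ} {b : β → ℝ}

theorem integrable_prod_smul_of_norm_le_mul [SFinite μ]
    (hK : StronglyMeasurable (Function.uncurry K)) (hφ : AEStronglyMeasurable φ κ)
    (haφ : Integrable (fun u ↦ a u * ‖φ u‖) κ) (hb : Integrable b μ)
    (hKab : ∀ u x, ‖K u x‖ ≤ a u * b x) :
    Integrable (fun p : α × β ↦ K p.1 p.2 • φ p.1) (κ.prod μ) := by
  refine (haφ.mul_prod hb).mono' (hK.aestronglyMeasurable.smul hφ.comp_fst) (.of_forall fun p ↦ ?_)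
  calc ‖K p.1 p.2 • φ p.1‖ = ‖K p.1 p.2‖ * ‖φ p.1‖ := norm_smul _ _
    _ ≤ a p.1 * b p.2 * ‖φ p.1‖ := by gcongr; exact hKab p.1 p.2
    _ = a p.1 * ‖φ p.1‖ * b p.2 := by ring

/-- The integrable majorant `b` confines everything to a set on which `μ` is `σ`-finite. -/
theorem integral_integral_smul_swap_of_norm_le_mul [SFinite κ] [NormedSpace ℝ E] [CompleteSpace E]
    (hK : StronglyMeasurable (Function.uncurry K)) (hφ : AEStronglyMeasurable φ κ)
    (haφ : Integrable (fun u ↦ a u * ‖φ u‖) κ) (hb : Integrable b μ)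
    (hKab : ∀ u x, ‖K u x‖ ≤ a u * b x) :
    Integrable (fun x ↦ ∫ u, K u x • φ u ∂κ) μ ∧
      Integrable (fun u ↦ (∫ x, K u x ∂μ) • φ u) κ ∧
      ∫ u, (∫ x, K u x ∂μ) • φ u ∂κ = ∫ x, ∫ u, K u x • φ u ∂κ ∂μ := by
  let t := hb.aefinStronglyMeasurable.sigmaFiniteSet
  have : SigmaFinite (μ.restrict t) := hb.aefinStronglyMeasurable.sigmaFinite_restrict
  have hK_off : ∀ᵐ x ∂μ, x ∉ t → ∀ u, K u x = 0 := by
    have hb_off := (ae_restrict_iff' hb.aefinStronglyMeasurable.measurableSet.compl).1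
      hb.aefinStronglyMeasurable.ae_eq_zero_compl
    filter_upwards [hb_off] with x hbx hxt u
    simpa [hbx hxt] using hKab u x
  have hKφ_off : ∀ᵐ x ∂μ, x ∉ t → ∫ u, K u x • φ u ∂κ = 0 :=
    hK_off.mono fun x hx hxt ↦ by simp [hx hxt]
  have hK_restrict (u : α) : ∫ x, K u x ∂μ = ∫ x in t, K u x ∂μ :=
    (setIntegral_eq_integral_of_ae_compl_eq_zero (hK_off.mono fun x hx hxt ↦ hx hxt u)).symm
  have hprod : Integrable (fun p : α × β ↦ K p.1 p.2 • φ p.1) (κ.prod (μ.restrict t)) :=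
    integrable_prod_smul_of_norm_le_mul hK hφ haφ hb.restrict hKab
  refine ⟨IntegrableOn.integrable_of_ae_notMem_eq_zero hprod.integral_prod_right hKφ_off, ?_, ?_⟩
  · simpa only [hK_restrict, integral_smul_const] using hprod.integral_prod_left
  · simp_rw [hK_restrict, ← integral_smul_const]
    rw [integral_integral_swap hprod, setIntegral_eq_integral_of_ae_compl_eq_zero hKφ_off]

end Fubini

section CompensatedExp

/-- The compensated exponential `e^{-iux} - 1 + iux`, the integrand of the Lévy–Khintchine
exponent `ψ̄`. -/
noncomputable def compensatedExp (u x : ℝ) : ℂ :=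
  Complex.exp (-(Complex.I * (u : ℂ) * (x : ℂ))) - 1 + Complex.I * (u : ℂ) * (x : ℂ)

/-- The exponent `ψ̄(u) = ∫ (e^{-iux} - 1 + iux) dμ(x)` of the paper, for a Lévy measure `μ`. -/
noncomputable def levyExponent (μ : Measure ℝ) (u : ℝ) : ℂ :=
  ∫ x, compensatedExp u x ∂μ

theorem continuous_uncurry_compensatedExp : Continuous (Function.uncurry compensatedExp) := by
  unfold Function.uncurry compensatedExp
  fun_prop

theorem norm_compensatedExp_le (u x : ℝ) : ‖compensatedExp u x‖ ≤ 2 * u ^ 2 * x ^ 2 := by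
  set z : ℂ := Complex.I * ((-(u * x) : ℝ) : ℂ) with hz
  have hexp : compensatedExp u x = Complex.exp z - 1 - z := by
    simp only [compensatedExp, hz]
    push_cast
    ring_nf
  have hnorm : ‖z‖ = |u * x| := by simp [hz]
  have hsq : 2 * u ^ 2 * x ^ 2 = 2 * ‖z‖ ^ 2 := by rw [hnorm, sq_abs]; ring
  rw [hexp, hsq]
  rcases le_total ‖z‖ 1 with hsmall | hlarge
  · linarith [Complex.norm_exp_sub_one_sub_id_le hsmall, sq_nonneg ‖z‖]
  · have hexp_sub_one : ‖Complex.exp z - 1‖ ≤ ‖z‖ := by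
      simpa only [hnorm, Real.norm_eq_abs, abs_neg] using
        Real.norm_exp_I_mul_ofReal_sub_one_le (x := -(u * x))
    calc ‖Complex.exp z - 1 - z‖ ≤ ‖z‖ + ‖z‖ := (norm_sub_le _ _).trans (by gcongr)
      _ ≤ 2 * ‖z‖ ^ 2 := by nlinarith

theorem integrable_compensatedExp {μ : Measure ℝ} (hμ : Integrable (fun x : ℝ ↦ x ^ 2) μ) (u : ℝ) :
    Integrable (compensatedExp u) μ :=
  (hμ.const_mul (2 * u ^ 2)).mono'
    (continuous_uncurry_compensatedExp.uncurry_left u).aestronglyMeasurable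
    (.of_forall (norm_compensatedExp_le u))

end CompensatedExp

theorem integrable_pow_smul_of_le {E : Type*} [NormedAddCommGroup E] [NormedSpace ℝ E]
    {ν : Measure ℝ} {φ : ℝ → E} (hφ : LocallyIntegrable φ ν) {k n : ℕ} (hkn : k ≤ n)
    (hn : Integrable (fun u : ℝ ↦ u ^ n • φ u) ν) : Integrable (fun u : ℝ ↦ u ^ k • φ u) ν := by
  have hnear : Integrable ((Set.Icc (-1 : ℝ) 1).indicator φ) ν :=
    (hφ.integrableOn_isCompact isCompact_Icc).integrable_indicator measurableSet_Icc
  refine (hnear.norm.add hn.norm).mono'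
    ((continuous_pow k).aestronglyMeasurable.smul hφ.aestronglyMeasurable) (.of_forall fun u ↦ ?_)
  rw [Pi.add_apply]
  by_cases hu : u ∈ Set.Icc (-1 : ℝ) 1
  · calc ‖u ^ k • φ u‖ = |u| ^ k * ‖φ u‖ := by rw [norm_smul, norm_pow, Real.norm_eq_abs]
      _ ≤ 1 * ‖φ u‖ := by gcongr; exact pow_le_one₀ (abs_nonneg u) (abs_le.2 hu)
      _ ≤ ‖(Set.Icc (-1 : ℝ) 1).indicator φ u‖ + ‖u ^ n • φ u‖ := by
        simp only [Set.indicator_of_mem hu, one_mul, le_add_iff_nonneg_right, norm_nonneg]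
  · have hu_one : 1 ≤ |u| := (not_le.1 (mt abs_le.1 hu)).le
    rw [Set.indicator_of_notMem hu, norm_zero, zero_add, norm_smul, norm_smul, norm_pow, norm_pow,
      Real.norm_eq_abs]
    gcongr

section Fourier

variable {E : Type*} [NormedAddCommGroup E] [NormedSpace ℂ E]

theorem integral_compensatedExp_smul_eq_fourier_sub {φ : ℝ → E} (hφ : Integrable φ)
    (hvφ : Integrable fun v : ℝ ↦ v • φ v) (x : ℝ) :
    ∫ v : ℝ, compensatedExp (2 * π * v) x • φ v = 𝓕 φ x - 𝓕 φ 0 - x • deriv (𝓕 φ) 0 := by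
  have hexp : Integrable fun v : ℝ ↦ 𝐞 (-(v * x)) • φ v := by
    simpa [mul_comm] using (Real.fourierIntegral_convergent_iff x).2 hφ
  have hlin : Integrable fun v : ℝ ↦ (-2 * π * Complex.I * v) • φ v := by
    refine (hvφ.smul (-2 * π * Complex.I)).congr (.of_forall fun v ↦ ?_)
    simp [← Complex.coe_smul, smul_smul]
  have hsplit (v : ℝ) : compensatedExp (2 * π * v) x • φ v =
      𝐞 (-(v * x)) • φ v - φ v - x • (-2 * π * Complex.I * v) • φ v := by
    rw [compensatedExp, Circle.smul_def, Real.fourierChar_apply, ← Complex.coe_smul x, smul_smul,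
      add_smul, sub_smul, one_smul, sub_eq_add_neg _ (_ • φ v), ← neg_smul]
    push_cast
    ring_nf
  have hzero : 𝓕 φ 0 = ∫ v, φ v := by simp [Real.fourier_real_eq]
  have hderiv : deriv (𝓕 φ) 0 = ∫ v : ℝ, (-2 * π * Complex.I * v) • φ v := by
    simp [Real.deriv_fourier hφ hvφ, Real.fourier_real_eq]
  calc ∫ v : ℝ, compensatedExp (2 * π * v) x • φ v
      = ∫ v : ℝ, 𝐞 (-(v * x)) • φ v - φ v - x • (-2 * π * Complex.I * v) • φ v := by
        simp_rw [hsplit]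
    _ = (∫ v : ℝ, 𝐞 (-(v * x)) • φ v) - (∫ v, φ v) -
          x • ∫ v : ℝ, (-2 * π * Complex.I * v) • φ v := by
        rw [integral_sub (by exact hexp.sub hφ) (by exact hlin.smul x), integral_sub hexp hφ,
          integral_smul]
    _ = 𝓕 φ x - 𝓕 φ 0 - x • deriv (𝓕 φ) 0 := by rw [hzero, hderiv, Real.fourier_real_eq]

theorem continuous_fourierInv_of_integrable {V : Type*} [NormedAddCommGroup V]
    [InnerProductSpace ℝ V] [MeasurableSpace V] [BorelSpace V] [FiniteDimensional ℝ V] {f : V → E}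
    (hf : Integrable f) : Continuous (𝓕⁻ f) :=
  VectorFourier.fourierIntegral_continuous Real.continuous_fourierChar continuous_inner.neg hf

/-- The Fourier transform `u ↦ ∫ e^{iux} f(x) dx` in the convention of the paper: angular
frequency, positive sign in the exponent and no normalising factor. -/
noncomputable def angularFourier (f : ℝ → E) (u : ℝ) : E :=
  ∫ x : ℝ, Complex.exp (Complex.I * (u : ℂ) * (x : ℂ)) • f x

theorem angularFourier_eq_fourierInv (f : ℝ → E) (u : ℝ) :
    angularFourier f u = 𝓕⁻ f (u / (2 * π)) := by
  rw [angularFourier, Real.fourierInv_eq']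
  congr! 4 with x
  simp only [RCLike.inner_apply, conj_trivial]
  push_cast
  field_simp

theorem continuous_angularFourier {f : ℝ → E} (hf : Integrable f) :
    Continuous (angularFourier f) := by
  simp_rw [funext (angularFourier_eq_fourierInv f)]
  exact (continuous_fourierInv_of_integrable hf).comp (continuous_id.div_const _)

theorem integrable_pow_smul_angularFourier_iff {f : ℝ → E} {k : ℕ} :
    Integrable (fun u : ℝ ↦ u ^ k • angularFourier f u) ↔
      Integrable fun v : ℝ ↦ v ^ k • 𝓕⁻ f v := by
  have hscale (u : ℝ) : u ^ k • angularFourier f u =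
      (2 * π) ^ k • (u / (2 * π)) ^ k • 𝓕⁻ f (u / (2 * π)) := by
    rw [angularFourier_eq_fourierInv, smul_smul, ← mul_pow, mul_div_cancel₀ _ Real.two_pi_pos.ne']
  simp_rw [hscale]
  rw [integrable_fun_smul_iff (pow_ne_zero k Real.two_pi_pos.ne')]
  exact integrable_comp_div_iff (fun v ↦ v ^ k • 𝓕⁻ f v) Real.two_pi_pos.ne'

theorem integrable_pow_smul_angularFourier_schwartz (f : 𝓢(ℝ, E)) (k : ℕ) :
    Integrable fun u : ℝ ↦ u ^ k • angularFourier f u := by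
  rw [integrable_pow_smul_angularFourier_iff, ← SchwartzMap.fourierInv_coe]
  refine ((𝓕⁻ f).integrable_pow_mul volume k).mono' (by fun_prop) (.of_forall fun v ↦ ?_)
  rw [norm_smul, norm_pow]

theorem integral_compensatedExp_smul_angularFourier [CompleteSpace E] {f : ℝ → E}
    (hf : Continuous f) (hfi : Integrable f)
    (hF : Integrable fun u : ℝ ↦ u ^ 2 • angularFourier f u) (x : ℝ) :
    ∫ u : ℝ, compensatedExp u x • angularFourier f u =
      (2 * π) • (f x - f 0 - x • deriv f 0) := by
  have hinv {k : ℕ} (hk : k ≤ 2) : Integrable fun v : ℝ ↦ v ^ k • 𝓕⁻ f v :=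
    integrable_pow_smul_of_le (continuous_fourierInv_of_integrable hfi).locallyIntegrable hk
      (integrable_pow_smul_angularFourier_iff.1 hF)
  have hinv_int : Integrable (𝓕⁻ f) := by simpa using hinv zero_le_two
  have hinversion : 𝓕 (𝓕⁻ f) = f := by
    refine hf.fourier_fourierInv_eq hfi ?_
    simpa [Real.fourierInv_eq_fourier_neg] using hinv_int.comp_neg
  calc ∫ u : ℝ, compensatedExp u x • angularFourier f u
      = ∫ u : ℝ, (fun v ↦ compensatedExp (2 * π * v) x • 𝓕⁻ f v) (u / (2 * π)) := by
        simp only [mul_div_cancel₀ _ Real.two_pi_pos.ne', angularFourier_eq_fourierInv]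
    _ = (2 * π) • ∫ v : ℝ, compensatedExp (2 * π * v) x • 𝓕⁻ f v := by
        rw [Measure.integral_comp_div (fun v ↦ compensatedExp (2 * π * v) x • 𝓕⁻ f v),
          abs_of_pos Real.two_pi_pos]
    _ = (2 * π) • (f x - f 0 - x • deriv f 0) := by
        rw [integral_compensatedExp_smul_eq_fourier_sub hinv_int (by simpa using hinv one_le_two),
          hinversion]

theorem leading_term_identity_general [CompleteSpace E] {μ : Measure ℝ}
    (hμ : Integrable (fun x : ℝ ↦ x ^ 2) μ) {f : ℝ → E} (hf : Continuous f) (hfi : Integrable f)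
    (hF : Integrable fun u : ℝ ↦ u ^ 2 • angularFourier f u) :
    Integrable (fun x ↦ f x - f 0 - x • deriv f 0) μ ∧
      (∀ u, Integrable (compensatedExp u) μ) ∧
      Integrable (fun u ↦ levyExponent μ u • angularFourier f u) ∧
      (2 * π : ℂ)⁻¹ • ∫ u, levyExponent μ u • angularFourier f u =
        ∫ x, (f x - f 0 - x • deriv f 0) ∂μ := by
  have hinner := integral_compensatedExp_smul_angularFourier hf hfi hF
  have hdom : Integrable fun u : ℝ ↦ 2 * u ^ 2 * ‖angularFourier f u‖ := by
    simpa [norm_smul, mul_assoc] using hF.norm.const_mul 2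
  obtain ⟨hleft, hright, hswap⟩ := integral_integral_smul_swap_of_norm_le_mul
    continuous_uncurry_compensatedExp.stronglyMeasurable
    (continuous_angularFourier hfi).aestronglyMeasurable hdom hμ norm_compensatedExp_le
  simp_rw [hinner] at hleft hswap
  refine ⟨?_, integrable_compensatedExp hμ, hright, ?_⟩
  · exact (integrable_fun_smul_iff Real.two_pi_pos.ne' _).1 hleft
  · simp only [levyExponent]
    rw [hswap, integral_smul, ← Complex.coe_smul]
    push_cast
    rw [inv_smul_smul₀ (by simp [Real.pi_ne_zero])]

end Fourier

/-- Computation of the leading term in the proof of Proposition 4.1: for a Lévy measure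
`μ` supported in `[-1,1]` with finite second moment and a smooth compactly supported
`f : ℝ → ℂ` with `f(0) = 0` and `f'(0) = 0`, the function `f` is `μ`-integrable,
`ψ̄(u) = ∫ (e^{-iux} - 1 + iux) dμ(x)` converges absolutely,
`u ↦ (𝓕f)(u) · ψ̄(u)` is integrable and `(2π)⁻¹ ∫ (𝓕f)(u) ψ̄(u) du = ∫ f dμ`. -/
theorem leading_term_identity
    (μ : Measure ℝ)
    (hμ_supp : μ (Set.Icc (-1 : ℝ) 1)ᶜ = 0)
    (hμ_mom : Integrable (fun x : ℝ => x ^ 2) μ)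
    (f : ℝ → ℂ) (hf_smooth : ContDiff ℝ (⊤ : ℕ∞) f) (hf_supp : HasCompactSupport f)
    (hf0 : f 0 = 0) (hf'0 : deriv f 0 = 0) :
    Integrable f μ ∧
      (∀ u : ℝ, Integrable (fun x : ℝ =>
        Complex.exp (-(Complex.I * (u : ℂ) * (x : ℂ))) - 1
          + Complex.I * (u : ℂ) * (x : ℂ)) μ) ∧
      Integrable (fun u : ℝ =>
        (∫ x : ℝ, Complex.exp (Complex.I * (u : ℂ) * (x : ℂ)) * f x) *
          (∫ x : ℝ, (Complex.exp (-(Complex.I * (u : ℂ) * (x : ℂ))) - 1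
            + Complex.I * (u : ℂ) * (x : ℂ)) ∂μ)) volume ∧
      (2 * Real.pi : ℂ)⁻¹ *
          (∫ u : ℝ,
            (∫ x : ℝ, Complex.exp (Complex.I * (u : ℂ) * (x : ℂ)) * f x) *
              (∫ x : ℝ, (Complex.exp (-(Complex.I * (u : ℂ) * (x : ℂ))) - 1
                + Complex.I * (u : ℂ) * (x : ℂ)) ∂μ)) =
        ∫ x : ℝ, f x ∂μ := by
  have hgen := leading_term_identity_general hμ_mom hf_smooth.continuous
    (hf_smooth.continuous.integrable_of_hasCompactSupport hf_supp)
    (integrable_pow_smul_angularFourier_schwartz (hf_supp.toSchwartzMap hf_smooth) 2)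
  simp only [hf0, hf'0, sub_zero, smul_zero, smul_eq_mul, mul_comm (levyExponent _ _)] at hgen
  exact hgen
end
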